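/- Let S be a numerical semigroup. Then S is irreducible (i.e., there do not exist numerical semigroups T₁, T₂ both properly containing S with S = T₁ ∩ T₂) if and only if I₀(S) has at most two quarks. -/

import Mathlib

/-!
Write `I ≼ E` when `E = I + K` for some `K ∈ I₀(S)`. Since `I ≼ E` forces `I ⊆ E`, the quarks are
the `≼`-minimal elements of `I₀(S) \ {S}`, and every `E ≠ S` in `I₀(S)` lies above some quark.
Let `F` be the largest gap of `S` (if `S = ℕ`, both sides hold trivially). Two facts drive the
proof: an ideal `S ∪ {x}` with a single extra element `x` is a quark, and `F ∈ E` implies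
`S ∪ {F} ≼ E`, because `E + (S ∪ {F}) = E`.

If `S` is irreducible, then every gap `x` satisfies `2x = F` or `F - x ∈ S`; otherwise the largest
gap `h` violating this would make `S ∪ {h}` a semigroup and `S = (S ∪ {F}) ∩ (S ∪ {h})`. Hence an
ideal `E ≠ S` with `F ∉ E` can only be `S ∪ {F / 2}`, so the quarks are among `S ∪ {F}` and
`S ∪ {F / 2}`.

If `S` is reducible, some semigroup `T ⊋ S` misses `F`. With `f = max (T \ S)`, the set `S ∪ {f}` is
a semigroup, so `f + f ∈ S` and `S ∪ {f}` and `S ∪ {F}` are two quarks. For a third one put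
`g = F - f`, a gap, and `E = S ∪ (g + S)`. Then `F ∉ E`, so `S ∪ {F} ⋠ E`. Also `S ∪ {f} ⋠ E`,
since an ideal above the semigroup `S ∪ {f}` is stable under adding `f`, whereas `g ∈ E` and
`f + g = F ∉ E`. A quark below `E` is therefore a third quark.
-/

open Set Pointwise

/-- A numerical semigroup: a subset of ℕ containing 0, closed under addition,
with finite complement. -/
def IsNumSgp (S : Set ℕ) : Prop :=
  0 ∈ S ∧ (∀ a ∈ S, ∀ b ∈ S, a + b ∈ S) ∧ Sᶜ.Finite

/-- The set of ideals of `S` whose smallest element is 0. -/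
def I0 (S : Set ℕ) : Set (Set ℕ) :=
  {E | 0 ∈ E ∧ E + S ⊆ E}

/-- The genus of `S`: the number of gaps. -/
noncomputable def genus (S : Set ℕ) : ℕ := Sᶜ.ncard

/-- Pseudo-Frobenius numbers of `S`. -/
def PFset (S : Set ℕ) : Set ℕ :=
  {f | f ∉ S ∧ ∀ s ∈ S, s ≠ 0 → f + s ∈ S}

/-- The type of `S`. -/
noncomputable def typeNS (S : Set ℕ) : ℕ := (PFset S).ncard

/-- The multiplicity of `S`: its least nonzero element. -/
noncomputable def mult (S : Set ℕ) : ℕ := sInf {n | n ∈ S ∧ n ≠ 0}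

/-- `wElt E m i` is the least element of `E` congruent to `i` modulo `m`. -/
noncomputable def wElt (E : Set ℕ) (m i : ℕ) : ℕ := sInf {e | e ∈ E ∧ e % m = i % m}

/-- The Frobenius number of `S`: the largest gap. -/
noncomputable def FrobN (S : Set ℕ) : ℕ := sSup Sᶜ

/-- A quark of `I₀(S)`: a non-identity element `Q` such that there is no
`I ∈ I₀(S)` with `I ≠ S`, `I ≠ Q` and `Q = I + K` for some `K ∈ I₀(S)`. -/
def IsQuark (S Q : Set ℕ) : Prop :=
  Q ∈ I0 S ∧ Q ≠ S ∧
    ¬ ∃ I ∈ I0 S, I ≠ S ∧ I ≠ Q ∧ ∃ K ∈ I0 S, Q = I + K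

lemma mem_I0_iff {S E : Set ℕ} : E ∈ I0 S ↔ 0 ∈ E ∧ ∀ e ∈ E, ∀ s ∈ S, e + s ∈ E := by
  refine and_congr_right fun _ => ?_
  rw [Set.add_subset_iff]

lemma subset_of_mem_I0 {S E : Set ℕ} (hE : E ∈ I0 S) : S ⊆ E := by
  rw [mem_I0_iff] at hE
  intro s hs
  simpa using hE.2 0 hE.1 s hs

/-- The hypothesis on a gap `x` is that it is a pseudo-Frobenius number. -/
lemma insert_mem_I0 {S : Set ℕ} (hS : IsNumSgp S) {x : ℕ}
    (h : ∀ s ∈ S, s ≠ 0 → x + s ∈ S) : insert x S ∈ I0 S := by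
  rw [mem_I0_iff]
  refine ⟨Or.inr hS.1, ?_⟩
  rintro e (rfl | he) s hs
  · by_cases h0 : s = 0
    · subst h0; exact Or.inl rfl
    · exact Or.inr (h s hs h0)
  · exact Or.inr (hS.2.1 _ he _ hs)

lemma insert_isNumSgp {S : Set ℕ} (hS : IsNumSgp S) {x : ℕ}
    (h : ∀ s ∈ S, s ≠ 0 → x + s ∈ S) (h2 : x + x ∈ S) : IsNumSgp (insert x S) := by
  refine ⟨Or.inr hS.1, ?_, hS.2.2.subset (compl_subset_compl.2 (subset_insert _ _))⟩
  have hI := (mem_I0_iff.1 (insert_mem_I0 hS h)).2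
  rintro a ha b (rfl | hb)
  · rcases ha with rfl | ha
    · exact Or.inr h2
    · rw [add_comm]; exact hI b (Or.inl rfl) a ha
  · exact hI a ha b hb

lemma subset_add_left {S I K : Set ℕ} (hK : K ∈ I0 S) : I ⊆ I + K := by
  intro i hi
  exact ⟨i, hi, 0, hK.1, by simp⟩

/-- There is no room for an ideal strictly between `S` and `S ∪ {x}`. -/
lemma insert_isQuark {S : Set ℕ} (hS : IsNumSgp S) {x : ℕ} (hx : x ∉ S)
    (h : ∀ s ∈ S, s ≠ 0 → x + s ∈ S) : IsQuark S (insert x S) := by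
  refine ⟨insert_mem_I0 hS h, fun he => hx (he ▸ Or.inl rfl), ?_⟩
  rintro ⟨I, hI, hIS, hIQ, K, hK, hQ⟩
  have hsub : I ⊆ insert x S := by rw [hQ]; exact subset_add_left hK
  have hSI := subset_of_mem_I0 hI
  by_cases hxI : x ∈ I
  · exact hIQ (hsub.antisymm (insert_subset hxI hSI))
  · refine hIS (Subset.antisymm (fun y hy => ?_) hSI)
    rcases hsub hy with rfl | hy'
    · exact absurd hy hxI
    · exact hy'

lemma add_mem_I0 {S I K : Set ℕ} (hI : I ∈ I0 S) (hK : K ∈ I0 S) : I + K ∈ I0 S :=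
  ⟨⟨0, hI.1, 0, hK.1, rfl⟩, by rw [add_assoc]; exact add_subset_add_left hK.2⟩

/-- Descent on the number of elements outside `S`. -/
lemma exists_quark {S : Set ℕ} (hS : IsNumSgp S) :
    ∀ (n : ℕ) (E : Set ℕ), (E \ S).ncard = n → E ∈ I0 S → E ≠ S →
      ∃ Q, IsQuark S Q ∧ ∃ K ∈ I0 S, E = Q + K := by
  intro n
  induction n using Nat.strong_induction_on with
  | _ n ih =>
    intro E hn hE hES
    have hSS : S ∈ I0 S := mem_I0_iff.2 ⟨hS.1, hS.2.1⟩
    by_cases hq : IsQuark S E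
    · exact ⟨E, hq, S, hSS, (subset_add_left hSS).antisymm hE.2⟩
    · have : ∃ I ∈ I0 S, I ≠ S ∧ I ≠ E ∧ ∃ K ∈ I0 S, E = I + K := by
        by_contra hc
        exact hq ⟨hE, hES, hc⟩
      obtain ⟨I, hI, hIS, hIE, K, hK, rfl⟩ := this
      have hsub : I ⊆ I + K := subset_add_left hK
      have hlt : (I \ S).ncard < n := by
        rw [← hn]
        refine Set.ncard_lt_ncard ?_ (hS.2.2.subset fun y hy => hy.2)
        refine ⟨sdiff_subset_sdiff_left hsub, fun hc => hIE (hsub.antisymm fun y hy => ?_)⟩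
        by_cases hyS : y ∈ S
        · exact subset_of_mem_I0 hI hyS
        · exact (hc ⟨hy, hyS⟩).1
      obtain ⟨Q, hQ, L, hL, rfl⟩ := ih _ hlt I rfl hI hIS
      exact ⟨Q, hQ, L + K, add_mem_I0 hL hK, add_assoc _ _ _⟩

/-- In an irreducible `S` with largest gap `F`, every gap `x` satisfies `2x = F` or `F - x ∈ S`. -/
lemma gap_of_irreducible {S : Set ℕ} (hS : IsNumSgp S) {F : ℕ} (hF : F ∉ S)
    (hmax : ∀ n, F < n → n ∈ S)
    (hirr : ¬ ∃ T₁ T₂ : Set ℕ, IsNumSgp T₁ ∧ IsNumSgp T₂ ∧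
        S ⊂ T₁ ∧ S ⊂ T₂ ∧ S = T₁ ∩ T₂) :
    ∀ x, x ∉ S → 2 * x ≠ F → F - x ∈ S := by
  by_contra hc
  push Not at hc
  let B : Set ℕ := {x | x ∉ S ∧ 2 * x ≠ F ∧ F - x ∉ S}
  have hBfin : B.Finite := hS.2.2.subset fun x hx => hx.1
  obtain ⟨h, ⟨hhS, hh2, hhF⟩, hhm⟩ := Set.exists_max_image B id hBfin hc
  simp only [id] at hhm
  have hle : ∀ x, x ∉ S → x ≤ F := fun x hx => not_lt.1 fun hl => hx (hmax x hl)
  have hhle := hle h hhS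
  -- `F - h` violates the condition too, so maximality puts `h` above `F / 2`.
  have hbig : F < 2 * h := by
    have : F - h ∈ B := ⟨hhF, by omega, by rwa [Nat.sub_sub_self hhle]⟩
    have := hhm _ this
    omega
  have hF0 : F ≠ 0 := fun h0 => hF (h0 ▸ hS.1)
  have hpf : ∀ s ∈ S, s ≠ 0 → h + s ∈ S := by
    intro s hs hs0
    by_contra hn
    have hle' := hle _ hn
    have h3 : F - (h + s) ∈ S := by
      by_contra h4
      have := hhm (h + s) ⟨hn, by omega, h4⟩
      omega
    apply hhF
    have := hS.2.1 _ h3 _ hs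
    rwa [show F - (h + s) + s = F - h by omega] at this
  have hne : F ≠ h := by
    rintro rfl
    exact hhF (by simpa using hS.1)
  refine hirr ⟨insert F S, insert h S,
    insert_isNumSgp hS (fun s _ hs0 => hmax _ (by omega)) (hmax _ (by omega)),
    insert_isNumSgp hS hpf (hmax _ (by omega)), ssubset_insert hF, ssubset_insert hhS, ?_⟩
  ext y
  simp only [mem_inter_iff, mem_insert_iff]
  constructor
  · intro hy; exact ⟨Or.inr hy, Or.inr hy⟩
  · rintro ⟨rfl | hy, hy' | hy'⟩
    · exact absurd hy' hne
    all_goals assumption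

lemma quark_cases {S : Set ℕ} (hS : IsNumSgp S) {F : ℕ} (hF : F ∉ S)
    (hmax : ∀ n, F < n → n ∈ S) (hgap : ∀ x, x ∉ S → 2 * x ≠ F → F - x ∈ S)
    {Q : Set ℕ} (hQ : IsQuark S Q) : Q = insert F S ∨ Q = insert (F / 2) S := by
  obtain ⟨hQI, hQS, hq⟩ := hQ
  have hSQ := subset_of_mem_I0 hQI
  have hQ' := mem_I0_iff.1 hQI
  by_cases hFQ : F ∈ Q
  · left
    by_contra hne
    have hFI : insert F S ∈ I0 S :=
      insert_mem_I0 hS fun s _ hs0 => hmax _ (by omega)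
    refine hq ⟨insert F S, hFI, (ssubset_insert hF).ne', Ne.symm hne, Q, hQI, ?_⟩
    rw [add_comm]
    refine (subset_add_left hFI).antisymm ?_
    rw [Set.add_subset_iff]
    rintro q hqQ s (rfl | hs)
    · by_cases hq0 : q = 0
      · simpa [hq0] using hFQ
      · exact hSQ (hmax _ (by omega))
    · exact hQ'.2 q hqQ s hs
  · right
    have key : ∀ x ∈ Q, x ∉ S → x = F / 2 := by
      intro x hx hxS
      by_contra hne
      have hle : x ≤ F := not_lt.1 fun hl => hxS (hmax x hl)
      have := hQ'.2 x hx _ (hgap x hxS (by omega))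
      rw [Nat.add_sub_cancel' hle] at this
      exact hFQ this
    obtain ⟨x, hx, hxS⟩ : ∃ x ∈ Q, x ∉ S := by
      by_contra! hc
      exact hQS (Subset.antisymm hc hSQ)
    refine Subset.antisymm (fun y hy => ?_) (insert_subset (key x hx hxS ▸ hx) hSQ)
    by_cases hyS : y ∈ S
    · exact Or.inr hyS
    · exact Or.inl (key y hy hyS)

/-- The hypotheses say that `T` is a semigroup properly containing `S` but not its largest gap;
the quarks found are `S ∪ {F}`, `S ∪ {f}` with `f = max (T \ S)`, and one below
`S ∪ ((F - f) + S)`. -/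
lemma three_quarks {S : Set ℕ} (hS : IsNumSgp S) {F : ℕ} (hF : F ∉ S)
    (hmax : ∀ n, F < n → n ∈ S) {T : Set ℕ} (hT : IsNumSgp T) (hST : S ⊂ T) (hFT : F ∉ T) :
    ∃ Q₁ Q₂ Q₃ : Set ℕ, IsQuark S Q₁ ∧ IsQuark S Q₂ ∧ IsQuark S Q₃ ∧
      Q₁ ≠ Q₂ ∧ Q₁ ≠ Q₃ ∧ Q₂ ≠ Q₃ := by
  obtain ⟨f, ⟨hfT, hfS⟩, hfm⟩ := Set.exists_max_image (T \ S) id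
    (hS.2.2.subset fun x hx => hx.2) (nonempty_of_ssubset hST)
  simp only [id] at hfm
  have hfF : f < F := by
    by_contra hc
    rcases (not_lt.1 hc).eq_or_lt with rfl | hl
    · exact hFT hfT
    · exact hfS (hmax _ hl)
  have hpf : ∀ t ∈ T, t ≠ 0 → f + t ∈ S := by
    intro t ht ht0
    by_contra hn
    have := hfm _ ⟨hT.2.1 _ hfT _ ht, hn⟩
    omega
  have hf0 : f ≠ 0 := fun h0 => hfS (h0 ▸ hS.1)
  have hpfS : ∀ s ∈ S, s ≠ 0 → f + s ∈ S := fun s hs => hpf s (hST.1 hs)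
  have hfsg := insert_isNumSgp hS hpfS (hpf f hfT hf0)
  have hg : F - f ∉ S := by
    intro hg
    have := hpfS _ hg (by omega)
    rw [Nat.add_sub_cancel' hfF.le] at this
    exact hF this
  let E : Set ℕ := {y | y ∈ S ∨ ∃ s ∈ S, y = F - f + s}
  have hE : E ∈ I0 S := by
    rw [mem_I0_iff]
    refine ⟨Or.inl hS.1, ?_⟩
    rintro e (he | ⟨s, hs, rfl⟩) t ht
    · exact Or.inl (hS.2.1 _ he _ ht)
    · exact Or.inr ⟨s + t, hS.2.1 _ hs _ ht, add_assoc _ _ _⟩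
  have hgE : F - f ∈ E := Or.inr ⟨0, hS.1, rfl⟩
  have hFE : F ∉ E := by
    rintro (h | ⟨s, hs, h⟩)
    · exact hF h
    · have : s = f := by omega
      exact hfS (this ▸ hs)
  obtain ⟨Q, hQ, K, hK, hEQ⟩ := exists_quark hS _ E rfl hE (fun h => hg (h ▸ hgE))
  refine ⟨insert F S, insert f S, Q, insert_isQuark hS hF fun s _ hs0 => hmax _ (by omega),
    insert_isQuark hS hfS hpfS, hQ, ?_, ?_, ?_⟩
  · intro h
    have : F ∈ insert f S := h ▸ Or.inl rfl
    rcases this with h' | h'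
    · omega
    · exact hF h'
  · rintro rfl
    apply hFE
    rw [hEQ]
    exact subset_add_left hK (Or.inl rfl)
  · rintro rfl
    apply hFE
    -- `g = F - f = a + k` with `a ∈ S ∪ {f}`, `k ∈ K`, so `F = (f + a) + k ∈ (S ∪ {f}) + K = E`.
    rw [hEQ] at hgE ⊢
    obtain ⟨a, ha, k, hk, hak⟩ := hgE
    refine ⟨f + a, hfsg.2.1 _ (Or.inl rfl) _ ha, k, hk, ?_⟩
    dsimp only at hak ⊢
    omega

theorem stmt_19 (S : Set ℕ) (hS : IsNumSgp S) :
    (¬ ∃ T₁ T₂ : Set ℕ, IsNumSgp T₁ ∧ IsNumSgp T₂ ∧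
        S ⊂ T₁ ∧ S ⊂ T₂ ∧ S = T₁ ∩ T₂) ↔
      ∀ Q₁ Q₂ Q₃ : Set ℕ, IsQuark S Q₁ → IsQuark S Q₂ → IsQuark S Q₃ →
        Q₁ = Q₂ ∨ Q₁ = Q₃ ∨ Q₂ = Q₃ := by
  by_cases hU : S = univ
  · subst hU
    constructor
    · intro _ Q₁ _ _ h₁ _ _
      exact absurd (univ_subset_iff.1 (subset_of_mem_I0 h₁.1)) h₁.2.1
    · rintro _ ⟨T, _, _, _, h, _⟩
      exact h.2 (subset_univ _)
  obtain ⟨F, hF, hFm⟩ := Set.exists_max_image Sᶜ id hS.2.2 (nonempty_compl.2 hU)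
  have hmax : ∀ n, F < n → n ∈ S := by
    intro n hn
    by_contra hc
    exact absurd (hFm n hc) (not_le.2 hn)
  constructor
  · intro hirr Q₁ Q₂ Q₃ h₁ h₂ h₃
    have hgap := gap_of_irreducible hS hF hmax hirr
    rcases quark_cases hS hF hmax hgap h₁ with rfl | rfl <;>
    rcases quark_cases hS hF hmax hgap h₂ with rfl | rfl <;>
    rcases quark_cases hS hF hmax hgap h₃ with rfl | rfl <;> simp
  · rintro hq ⟨T₁, T₂, hT₁, hT₂, h₁, h₂, hST⟩
    have : ∃ T, IsNumSgp T ∧ S ⊂ T ∧ F ∉ T := by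
      by_cases hF1 : F ∈ T₁
      · exact ⟨T₂, hT₂, h₂, fun hF2 => hF (hST ▸ ⟨hF1, hF2⟩)⟩
      · exact ⟨T₁, hT₁, h₁, hF1⟩
    obtain ⟨T, hT, hsT, hFT⟩ := this
    obtain ⟨Q₁, Q₂, Q₃, q₁, q₂, q₃, n₁, n₂, n₃⟩ := three_quarks hS hF hmax hT hsT hFT
    rcases hq Q₁ Q₂ Q₃ q₁ q₂ q₃ with h | h | h
    exacts [n₁ h, n₂ h, n₃ h]
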